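/- Let n ≥ 1 and 0 < α, s < 1. If φ is a Schwartz function on ℝⁿ×ℝ, then there exists a constant C > 0 such that for all (x,t) ∈ ℝⁿ×ℝ, |D_right^α φ(x,t) + (-Δ)^s φ(x,t)| ≤ C / ((1+|x|^{n+2s})(1+|t|^{1+α})). -/

import Mathlib

open MeasureTheory Set

/-- The normalization constant `C_α = 1/|Γ(-α)|` for the Marchaud fractional derivative. -/
noncomputable def Calpha (α : ℝ) : ℝ := 1 / |Real.Gamma (-α)|

/-- The normalization constant `C_{n,s} = 4^s Γ(n/2+s)/(π^{n/2}|Γ(-s)|)` for the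
fractional Laplacian. -/
noncomputable def Cns (n : ℕ) (s : ℝ) : ℝ :=
  (4 : ℝ) ^ s * Real.Gamma ((n : ℝ) / 2 + s) / (Real.pi ^ ((n : ℝ) / 2) * |Real.Gamma (-s)|)

/-- The right Marchaud fractional derivative of order `α` in the time variable:
`D_right^α φ(x,t) = C_α ∫_t^∞ (φ(x,t) - φ(x,τ))/(τ-t)^{1+α} dτ`. -/
noncomputable def marchaudRight {n : ℕ} (α : ℝ) (φ : EuclideanSpace ℝ (Fin n) × ℝ → ℝ)
    (x : EuclideanSpace ℝ (Fin n)) (t : ℝ) : ℝ :=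
  Calpha α * ∫ τ in Ioi t, (φ (x, t) - φ (x, τ)) / (τ - t) ^ (1 + α)

/-- The fractional Laplacian `(-Δ)^s` acting in the space variable:
`(-Δ)^s φ(x,t) = (C_{n,s}/2) ∫_{ℝⁿ} (2φ(x,t) - φ(x+y,t) - φ(x-y,t))/|y|^{n+2s} dy`. -/
noncomputable def fracLap {n : ℕ} (s : ℝ) (φ : EuclideanSpace ℝ (Fin n) × ℝ → ℝ)
    (x : EuclideanSpace ℝ (Fin n)) (t : ℝ) : ℝ :=
  Cns n s / 2 * ∫ y : EuclideanSpace ℝ (Fin n),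
    (2 * φ (x, t) - φ (x + y, t) - φ (x - y, t)) / ‖y‖ ^ ((n : ℝ) + 2 * s)

open Module in
/-- The truncated power `min 1 (‖h‖ ^ k) / ‖h‖ ^ p` is integrable when `dim E < p < dim E + k`. -/
lemma integrable_min_one_norm_pow_div {E : Type*} [NormedAddCommGroup E] [NormedSpace ℝ E]
    [FiniteDimensional ℝ E] [Nontrivial E] [MeasurableSpace E] [BorelSpace E]
    (μ : Measure E) [μ.IsAddHaarMeasure] {p : ℝ} {k : ℕ}
    (hp : (finrank ℝ E : ℝ) < p) (hpk : p < finrank ℝ E + k) :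
    Integrable (fun h : E => min 1 (‖h‖ ^ k) / ‖h‖ ^ p) μ := by
  have hd : 1 ≤ finrank ℝ E := finrank_pos
  have hrw (y : ℝ) (hy : 0 < y) : y ^ (finrank ℝ E - 1) = y ^ ((finrank ℝ E : ℝ) - 1) := by
    rw [← Real.rpow_natCast, Nat.cast_sub hd, Nat.cast_one]
  rw [integrable_fun_norm_addHaar μ (f := fun r : ℝ => min 1 (r ^ k) / r ^ p),
    ← Ioc_union_Ioi_eq_Ioi zero_le_one]
  refine IntegrableOn.union ?_ ?_
  · refine ((intervalIntegral.intervalIntegrable_rpow'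
      (r := (finrank ℝ E : ℝ) - 1 + k - p) (by linarith)).1).congr_fun ?_ measurableSet_Ioc
    intro y hy
    have h1 : y ^ k ≤ 1 := pow_le_one₀ hy.1.le hy.2
    simp only [smul_eq_mul]
    rw [min_eq_right h1, hrw y hy.1, Real.rpow_sub hy.1, Real.rpow_add hy.1, Real.rpow_natCast,
      mul_div_assoc]
  · refine (integrableOn_Ioi_rpow_of_lt (a := (finrank ℝ E : ℝ) - 1 - p) (by linarith)
      zero_lt_one).congr_fun ?_ measurableSet_Ioi
    intro y (hy : 1 < y)
    have hy0 : 0 < y := by linarith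
    have h1 : 1 ≤ y ^ k := one_le_pow₀ hy.le
    simp only [smul_eq_mul]
    rw [min_eq_left h1, hrw y hy0, Real.rpow_sub hy0, mul_one_div]

/-- The weight `(1 + ‖·‖) ^ (-M)` is slowly varying on balls of radius `(1 + ‖x‖) / 2`. -/
lemma one_add_norm_rpow_neg_le {E : Type*} [SeminormedAddCommGroup E] {M : ℝ} (hM : 0 ≤ M)
    {x y : E} (hxy : ‖x - y‖ ≤ (1 + ‖x‖) / 2) :
    (1 + ‖y‖) ^ (-M) ≤ 2 ^ M * (1 + ‖x‖) ^ (-M) := by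
  have h : (1 + ‖x‖) / 2 ≤ 1 + ‖y‖ := by
    have := norm_sub_norm_le x y
    linarith
  calc (1 + ‖y‖) ^ (-M) ≤ ((1 + ‖x‖) / 2) ^ (-M) :=
        Real.rpow_le_rpow_of_nonpos (by positivity) h (by linarith)
    _ = 2 ^ M * (1 + ‖x‖) ^ (-M) := by
        rw [Real.div_rpow (by positivity) (by norm_num), Real.rpow_neg zero_le_two, div_inv_eq_mul,
          mul_comm]

/-- A pointwise bound for a finite-difference quotient of a function decaying like
`(1 + ‖·‖) ^ (-M)`. -/
lemma abs_div_norm_rpow_le {E : Type*} [NormedAddCommGroup E] {p M A D : ℝ} {k : ℕ}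
    (hp : 0 < p) (hpM : p ≤ M) (hA : 0 ≤ A) {x h : E}
    (hsmall : ‖h‖ ≤ (1 + ‖x‖) / 2 → |D| ≤ A * (1 + ‖x‖) ^ (-M) * ‖h‖ ^ k)
    (hglobal : |D| ≤ A * ((1 + ‖x‖) ^ (-M) + (1 + ‖x + h‖) ^ (-M) + (1 + ‖x - h‖) ^ (-M))) :
    |D / ‖h‖ ^ p| ≤ A * (1 + ‖x‖) ^ (-p) *
      ((1 + 2 * 2 ^ M + 2 ^ k) * (min 1 (‖h‖ ^ k) / ‖h‖ ^ p) +
        2 ^ p * ((1 + ‖x + h‖) ^ (-M) + (1 + ‖x - h‖) ^ (-M))) := by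
  set W := (1 + ‖x‖) ^ (-p) with hW
  set w := (1 + ‖x‖) ^ (-M)
  set u := (1 + ‖x + h‖) ^ (-M)
  set v := (1 + ‖x - h‖) ^ (-M)
  have hM : 0 ≤ M := hp.le.trans hpM
  have hW0 : 0 ≤ W := by positivity
  have hw0 : 0 ≤ w := by positivity
  have hu0 : 0 ≤ u := by positivity
  have hv0 : 0 ≤ v := by positivity
  have hwW : w ≤ W := Real.rpow_le_rpow_of_exponent_le (by linarith [norm_nonneg x]) (by linarith)
  rcases eq_or_ne h 0 with rfl | hh
  · simp only [norm_zero, Real.zero_rpow hp.ne', div_zero, abs_zero, mul_zero, zero_add]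
    positivity
  have hh0 : 0 < ‖h‖ := norm_pos_iff.2 hh
  have hP : 0 < ‖h‖ ^ p := by positivity
  set m := min 1 (‖h‖ ^ k) with hm
  have hm0 : 0 ≤ m := by positivity
  have hM2 : (0 : ℝ) < 2 ^ M := by positivity
  rw [abs_div, abs_of_pos hP, div_le_iff₀ hP]
  have key : |D| ≤ A * W * ((1 + 2 * 2 ^ M + 2 ^ k) * m + 2 ^ p * (u + v) * ‖h‖ ^ p) := by
    have hc : (0 : ℝ) ≤ 2 ^ k := by positivity
    have hrest : 0 ≤ 2 ^ p * (u + v) * ‖h‖ ^ p := by positivity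
    rcases le_or_gt ‖h‖ ((1 + ‖x‖) / 2) with hle | hlt
    · suffices hs : |D| ≤ A * w * ((1 + 2 * 2 ^ M) * m) by
        refine hs.trans ?_
        gcongr
        nlinarith
      rcases le_total 1 ‖h‖ with h1 | h1
      · have hm1 : m = 1 := min_eq_left (one_le_pow₀ h1)
        have hu' : u ≤ 2 ^ M * w := one_add_norm_rpow_neg_le hM (by simpa using hle)
        have hv' : v ≤ 2 ^ M * w := one_add_norm_rpow_neg_le hM (by simpa using hle)
        calc |D| ≤ A * (w + u + v) := hglobal
          _ ≤ A * (w + 2 ^ M * w + 2 ^ M * w) := by gcongr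
          _ = _ := by rw [hm1]; ring
      · have hm1 : m = ‖h‖ ^ k := min_eq_right (pow_le_one₀ hh0.le h1)
        calc |D| ≤ A * w * ‖h‖ ^ k := hsmall hle
          _ ≤ A * w * ((1 + 2 * 2 ^ M) * m) := by
            rw [hm1]
            gcongr
            nlinarith [pow_pos hh0 k]
    · have hm1 : 1 ≤ 2 ^ k * m := by
        rcases le_total 1 (‖h‖ ^ k) with h1 | h1
        · rw [hm, min_eq_left h1, mul_one]
          exact one_le_pow₀ one_le_two
        · rw [hm, min_eq_right h1, ← mul_pow]
          exact one_le_pow₀ (by linarith [norm_nonneg x])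
      have hWp : 1 ≤ W * (2 ^ p * ‖h‖ ^ p) := by
        rw [hW, Real.rpow_neg (by positivity), ← Real.mul_rpow zero_le_two hh0.le,
          inv_mul_eq_div, one_le_div (by positivity)]
        exact Real.rpow_le_rpow (by positivity) (by linarith) hp.le
      calc |D| ≤ A * (w + u + v) := hglobal
        _ ≤ A * (W * (2 ^ k * m) + (W * (2 ^ p * ‖h‖ ^ p)) * (u + v)) := by
          refine mul_le_mul_of_nonneg_left ?_ hA
          linarith [mul_le_mul_of_nonneg_left hm1 hW0,
            mul_le_mul_of_nonneg_right hWp (add_nonneg hu0 hv0)]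
        _ = A * W * (2 ^ k * m + 2 ^ p * (u + v) * ‖h‖ ^ p) := by ring
        _ ≤ _ := by
          gcongr
          linarith
  refine key.trans (le_of_eq ?_)
  field_simp

open Module in
/-- Decay of the singular integral of a finite difference of order `k`. -/
lemma exists_abs_integral_div_norm_rpow_le {E : Type*} [NormedAddCommGroup E] [NormedSpace ℝ E]
    [FiniteDimensional ℝ E] [Nontrivial E] [MeasurableSpace E] [BorelSpace E]
    (μ : Measure E) [μ.IsAddHaarMeasure] {p M : ℝ} {k : ℕ}
    (hp : (finrank ℝ E : ℝ) < p) (hpk : p < finrank ℝ E + k) (hpM : p ≤ M) :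
    ∃ K : ℝ, 0 ≤ K ∧ ∀ (x : E) (A : ℝ) (D : E → ℝ), 0 ≤ A →
      (∀ h, ‖h‖ ≤ (1 + ‖x‖) / 2 → |D h| ≤ A * (1 + ‖x‖) ^ (-M) * ‖h‖ ^ k) →
      (∀ h, |D h| ≤
        A * ((1 + ‖x‖) ^ (-M) + (1 + ‖x + h‖) ^ (-M) + (1 + ‖x - h‖) ^ (-M))) →
      |∫ h, D h / ‖h‖ ^ p ∂μ| ≤ K * A * (1 + ‖x‖) ^ (-p) := by
  have hG := integrable_min_one_norm_pow_div μ hp hpk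
  have hw : Integrable (fun y : E => (1 + ‖y‖) ^ (-M)) μ :=
    integrable_one_add_norm (hp.trans_le hpM)
  refine ⟨(1 + 2 * 2 ^ M + 2 ^ k) * (∫ h : E, min 1 (‖h‖ ^ k) / ‖h‖ ^ p ∂μ) +
    2 ^ p * (2 * ∫ y : E, (1 + ‖y‖) ^ (-M) ∂μ), ?_, fun x A D hA hsmall hglobal => ?_⟩
  · have h1 : 0 ≤ ∫ h : E, min 1 (‖h‖ ^ k) / ‖h‖ ^ p ∂μ :=
      integral_nonneg fun h => by positivity
    have h2 : 0 ≤ ∫ y : E, (1 + ‖y‖) ^ (-M) ∂μ := integral_nonneg fun h => by positivity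
    positivity
  have hp0 : 0 < p := lt_of_le_of_lt (Nat.cast_nonneg _) hp
  have hu : Integrable (fun h : E => (1 + ‖x + h‖) ^ (-M)) μ := hw.comp_add_left x
  have hv : Integrable (fun h : E => (1 + ‖x - h‖) ^ (-M)) μ := hw.comp_sub_left x
  have huv : Integrable (fun h : E => (1 + ‖x + h‖) ^ (-M) + (1 + ‖x - h‖) ^ (-M)) μ := hu.add hv
  have hsum : Integrable (fun h : E =>
      (1 + 2 * 2 ^ M + 2 ^ k) * (min 1 (‖h‖ ^ k) / ‖h‖ ^ p) +
        2 ^ p * ((1 + ‖x + h‖) ^ (-M) + (1 + ‖x - h‖) ^ (-M))) μ :=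
    (hG.const_mul _).add (huv.const_mul _)
  rw [← Real.norm_eq_abs]
  refine (norm_integral_le_of_norm_le (hsum.const_mul (A * (1 + ‖x‖) ^ (-p)))
    (.of_forall fun h => (Real.norm_eq_abs _).trans_le
      (abs_div_norm_rpow_le hp0 hpM hA (hsmall h) (hglobal h)))).trans (le_of_eq ?_)
  rw [integral_const_mul, integral_add (hG.const_mul _) (huv.const_mul _),
    integral_const_mul, integral_const_mul, integral_add hu hv,
    integral_add_left_eq_self (fun y : E => (1 + ‖y‖) ^ (-M)) x,
    integral_sub_left_eq_self (fun y : E => (1 + ‖y‖) ^ (-M)) μ x]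
  ring

/-- Rapid decay of a Schwartz function on a product, separately in both variables. -/
lemma SchwartzMap.exists_norm_le_one_add_norm_rpow_mul {E F G : Type*}
    [NormedAddCommGroup E] [NormedSpace ℝ E] [NormedAddCommGroup F] [NormedSpace ℝ F]
    [NormedAddCommGroup G] [NormedSpace ℝ G] (f : SchwartzMap (E × F) G) (k l : ℕ) :
    ∃ C : ℝ, 0 ≤ C ∧ ∀ x t, ‖f (x, t)‖ ≤ C * (1 + ‖x‖) ^ (-(k : ℝ)) * (1 + ‖t‖) ^ (-(l : ℝ)) := by
  refine ⟨2 ^ (k + l) *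
    (Finset.Iic (k + l, 0)).sup (fun m => SchwartzMap.seminorm ℝ m.1 m.2) f,
    by positivity, fun x t => ?_⟩
  have h := SchwartzMap.one_add_le_sup_seminorm_apply (𝕜 := ℝ) (m := (k + l, 0)) (k := k + l)
    (n := 0) le_rfl le_rfl f (x, t)
  rw [norm_iteratedFDeriv_zero, pow_add] at h
  have hx : ‖x‖ ≤ ‖(x, t)‖ := le_max_left _ _
  have ht : ‖t‖ ≤ ‖(x, t)‖ := le_max_right _ _
  rw [Real.rpow_neg (by positivity), Real.rpow_neg (by positivity), Real.rpow_natCast,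
    Real.rpow_natCast, mul_assoc, ← mul_inv, ← div_eq_mul_inv, le_div_iff₀ (by positivity),
    mul_comm]
  refine le_trans ?_ h
  gcongr

/-- `(1 + r) ^ (-q)` is controlled by `1 / (1 + r ^ q)`. -/
lemma one_add_rpow_neg_le {r q : ℝ} (hr : 0 ≤ r) (hq : 0 ≤ q) :
    (1 + r) ^ (-q) ≤ 2 / (1 + r ^ q) := by
  rw [Real.rpow_neg (by positivity), ← one_div, div_le_div_iff₀ (by positivity) (by positivity)]
  have h1 : 1 ≤ (1 + r) ^ q := Real.one_le_rpow (by linarith) hq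
  have h2 : r ^ q ≤ (1 + r) ^ q := Real.rpow_le_rpow hr (by linarith) hq
  linarith

/-- A second-difference bound on a convex set. -/
lemma norm_second_difference_le {V : Type*} [NormedAddCommGroup V] [NormedSpace ℝ V]
    {f : V → ℝ} (hf : Differentiable ℝ f) (hf' : Differentiable ℝ (fderiv ℝ f)) {S : Set V}
    (hS : Convex ℝ S) {B : ℝ} (hB : ∀ z ∈ S, ‖fderiv ℝ (fderiv ℝ f) z‖ ≤ B) {a b : V}
    (hadd : a + b ∈ S) (hsub : a - b ∈ S) :
    |2 * f a - f (a + b) - f (a - b)| ≤ 2 * B * ‖b‖ ^ 2 := by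
  have hB0 : 0 ≤ B := (norm_nonneg (fderiv ℝ (fderiv ℝ f) (a + b))).trans (hB _ hadd)
  have hseg (r : ℝ) (hr : r ∈ Icc (-1 : ℝ) 1) : a + r • b ∈ S := by
    have := hS hadd hsub (a := (1 + r) / 2) (b := (1 - r) / 2) (by linarith [hr.1])
      (by linarith [hr.2]) (by ring)
    convert this using 1
    module
  have hd (r : ℝ) : HasDerivAt (fun r : ℝ => f (a + r • b) + f (a + (-r) • b))
      (fderiv ℝ f (a + r • b) b - fderiv ℝ f (a + (-r) • b) b) r := by
    have h1 : HasDerivAt (fun r : ℝ => a + r • b) b r := by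
      simpa using ((hasDerivAt_id r).smul_const b).const_add a
    have h2 : HasDerivAt (fun r : ℝ => a + (-r) • b) (-b) r := by
      simpa using ((hasDerivAt_id r).neg.smul_const b).const_add a
    convert! ((hf _).hasFDerivAt.comp_hasDerivAt r h1).add
      ((hf _).hasFDerivAt.comp_hasDerivAt r h2) using 1
    rw [map_neg, sub_eq_add_neg]
  have hbound (r : ℝ) (hr : r ∈ Ico (0 : ℝ) 1) :
      ‖fderiv ℝ f (a + r • b) b - fderiv ℝ f (a + (-r) • b) b‖ ≤ 2 * B * ‖b‖ ^ 2 := by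
    have h := hS.norm_image_sub_le_of_norm_fderiv_le (𝕜 := ℝ) (fun z _ => hf' z) hB
      (hseg (-r) ⟨by linarith [hr.2], by linarith [hr.1]⟩)
      (hseg r ⟨by linarith [hr.1], hr.2.le⟩)
    have hdiff : ‖a + r • b - (a + (-r) • b)‖ ≤ 2 * ‖b‖ := by
      have : a + r • b - (a + (-r) • b) = (2 * r) • b := by module
      rw [this, norm_smul, Real.norm_of_nonneg (by linarith [hr.1])]
      gcongr
      linarith [hr.2]
    rw [← sub_apply]
    calc _ ≤ ‖fderiv ℝ f (a + r • b) - fderiv ℝ f (a + (-r) • b)‖ * ‖b‖ :=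
          ContinuousLinearMap.le_opNorm _ _
      _ ≤ (B * (2 * ‖b‖)) * ‖b‖ := by
          gcongr
          exact h.trans (by gcongr)
      _ = _ := by ring
  have := norm_image_sub_le_of_norm_deriv_le_segment_01'
    (fun r _ => (hd r).hasDerivWithinAt) hbound
  rw [← abs_neg]
  convert this using 1
  rw [Real.norm_eq_abs]
  congr 1
  simp only [one_smul, neg_zero, zero_smul, add_zero, neg_smul, ← sub_eq_add_neg]
  ring

/-- The Marchaud derivative of a Schwartz function decays rapidly in space and like
`(1 + |t|) ^ (-(1 + α))` in time. -/
lemma exists_abs_marchaudRight_le {n : ℕ} {α : ℝ} (hα0 : 0 < α) (hα1 : α < 1)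
    (φ : SchwartzMap (EuclideanSpace ℝ (Fin n) × ℝ) ℝ) (N : ℕ) :
    ∃ C : ℝ, 0 ≤ C ∧ ∀ x t, |marchaudRight α φ x t| ≤
      C * (1 + ‖x‖) ^ (-(N : ℝ)) * (1 + |t|) ^ (-(1 + α)) := by
  obtain ⟨C₀, hC₀, h₀⟩ := φ.exists_norm_le_one_add_norm_rpow_mul N 2
  obtain ⟨C₁, hC₁, h₁⟩ :=
    (SchwartzMap.fderivCLM ℝ _ _ φ).exists_norm_le_one_add_norm_rpow_mul N 2
  obtain ⟨K, hK, hint⟩ := exists_abs_integral_div_norm_rpow_le (volume : Measure ℝ)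
    (p := 1 + α) (M := (2 : ℕ)) (k := 1) (by simpa using hα0)
    (by simpa using hα1) (by push_cast; linarith)
  have hc : 0 ≤ |Calpha α| * K * (C₀ + C₁ * 2 ^ ((2 : ℕ) : ℝ)) := by positivity
  refine ⟨_, hc, fun x t => ?_⟩
  set X := (1 + ‖x‖) ^ (-(N : ℝ))
  have hX0 : 0 ≤ X := by positivity
  have hshift : ∫ τ in Ioi t, (φ (x, t) - φ (x, τ)) / (τ - t) ^ (1 + α) =
      ∫ h : ℝ, (if 0 < h then φ (x, t) - φ (x, t + h) else 0) / ‖h‖ ^ (1 + α) := by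
    rw [← integral_indicator measurableSet_Ioi, ← integral_add_left_eq_self _ t]
    congr 1 with h
    by_cases hh : 0 < h
    · simp [indicator, hh, abs_of_pos hh]
    · simp [indicator, hh]
  have key := hint t ((C₀ + C₁ * 2 ^ ((2 : ℕ) : ℝ)) * X)
    (fun h => if 0 < h then φ (x, t) - φ (x, t + h) else 0) (by positivity) ?_ ?_
  · rw [marchaudRight, hshift, abs_mul]
    calc _ ≤ |Calpha α| * (K * ((C₀ + C₁ * 2 ^ ((2 : ℕ) : ℝ)) * X) * (1 + ‖t‖) ^ (-(1 + α))) := by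
          gcongr
      _ = _ := by rw [Real.norm_eq_abs]; ring
  · intro h hh
    split_ifs with hpos
    · have hbound : ∀ z ∈ ({x} : Set (EuclideanSpace ℝ (Fin n))) ×ˢ
          Metric.closedBall t ((1 + ‖t‖) / 2), ‖fderiv ℝ φ z‖ ≤
            C₁ * X * (2 ^ ((2 : ℕ) : ℝ) * (1 + ‖t‖) ^ (-((2 : ℕ) : ℝ))) := by
        rintro ⟨y, r⟩ ⟨hy, hr⟩
        obtain rfl : y = x := hy
        refine (h₁ y r).trans ?_
        gcongr
        exact one_add_norm_rpow_neg_le (by positivity) (by rwa [← dist_eq_norm, dist_comm])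
      have hmv := ((convex_singleton x).prod (convex_closedBall t ((1 + ‖t‖) / 2))
        ).norm_image_sub_le_of_norm_fderiv_le (𝕜 := ℝ) (fun z _ => φ.differentiableAt) hbound
        (x := (x, t + h)) (y := (x, t)) ⟨rfl, by simpa using hh⟩
        ⟨rfl, Metric.mem_closedBall_self (by positivity)⟩
      rw [← Real.norm_eq_abs]
      refine hmv.trans ?_
      have hnorm : ‖((x, t) : EuclideanSpace ℝ (Fin n) × ℝ) - (x, t + h)‖ = ‖h‖ := by
        simp [Prod.norm_def]
      rw [hnorm, pow_one]
      have : 0 ≤ C₀ * X * (1 + ‖t‖) ^ (-((2 : ℕ) : ℝ)) * ‖h‖ := by positivity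
      linarith
    · rw [abs_zero]
      positivity
  · intro h
    split_ifs with hpos
    · have hA : C₀ * X ≤ (C₀ + C₁ * 2 ^ ((2 : ℕ) : ℝ)) * X := by
        gcongr
        exact le_add_of_nonneg_right (by positivity)
      rw [← Real.norm_eq_abs]
      calc ‖φ (x, t) - φ (x, t + h)‖ ≤ ‖φ (x, t)‖ + ‖φ (x, t + h)‖ := norm_sub_le _ _
        _ ≤ C₀ * X * (1 + ‖t‖) ^ (-((2 : ℕ) : ℝ)) + C₀ * X * (1 + ‖t + h‖) ^ (-((2 : ℕ) : ℝ)) :=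
          add_le_add (h₀ _ _) (h₀ _ _)
        _ = C₀ * X * ((1 + ‖t‖) ^ (-((2 : ℕ) : ℝ)) + (1 + ‖t + h‖) ^ (-((2 : ℕ) : ℝ))) := by ring
        _ ≤ _ := by
          refine mul_le_mul hA ?_ (by positivity) (by positivity)
          exact le_add_of_nonneg_right (by positivity)
    · rw [abs_zero]
      positivity

/-- The fractional Laplacian of a Schwartz function decays like `(1 + ‖x‖) ^ (-(n + 2 * s))` in
space and rapidly in time. -/
lemma exists_abs_fracLap_le {n : ℕ} (hn : 1 ≤ n) {s : ℝ} (hs0 : 0 < s) (hs1 : s < 1)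
    (φ : SchwartzMap (EuclideanSpace ℝ (Fin n) × ℝ) ℝ) (N : ℕ) :
    ∃ C : ℝ, 0 ≤ C ∧ ∀ x t, |fracLap s φ x t| ≤
      C * (1 + ‖x‖) ^ (-((n : ℝ) + 2 * s)) * (1 + |t|) ^ (-(N : ℝ)) := by
  have : Nonempty (Fin n) := ⟨⟨0, hn⟩⟩
  obtain ⟨C₀, hC₀, h₀⟩ := φ.exists_norm_le_one_add_norm_rpow_mul (n + 2) N
  obtain ⟨C₂, hC₂, h₂⟩ := (SchwartzMap.fderivCLM ℝ _ _
    (SchwartzMap.fderivCLM ℝ _ _ φ)).exists_norm_le_one_add_norm_rpow_mul (n + 2) N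
  obtain ⟨K, hK, hint⟩ := exists_abs_integral_div_norm_rpow_le
    (volume : Measure (EuclideanSpace ℝ (Fin n)))
    (p := n + 2 * s) (M := (n + 2 : ℕ)) (k := 2) (by simpa using hs0)
    (by simpa using hs1) (by push_cast; linarith)
  set M : ℝ := ((n + 2 : ℕ) : ℝ)
  have hc : 0 ≤ |Cns n s / 2| * K * (2 * C₀ + 2 * C₂ * 2 ^ M) := by positivity
  refine ⟨_, hc, fun x t => ?_⟩
  set T := (1 + |t|) ^ (-(N : ℝ)) with hT
  have hT0 : 0 ≤ T := by positivity
  have key := hint x ((2 * C₀ + 2 * C₂ * 2 ^ M) * T)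
    (fun y => 2 * φ (x, t) - φ (x + y, t) - φ (x - y, t)) (by positivity) ?_ ?_
  · rw [fracLap, abs_mul]
    calc _ ≤ |Cns n s / 2| * (K * ((2 * C₀ + 2 * C₂ * 2 ^ M) * T) *
            (1 + ‖x‖) ^ (-((n : ℝ) + 2 * s))) := by gcongr
      _ = _ := by ring
  · intro y hy
    have hbound : ∀ z ∈ Metric.closedBall x ((1 + ‖x‖) / 2) ×ˢ ({t} : Set ℝ),
        ‖fderiv ℝ (fderiv ℝ φ) z‖ ≤ C₂ * (2 ^ M * (1 + ‖x‖) ^ (-M)) * T := by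
      rintro ⟨z, r⟩ ⟨hz, hr⟩
      obtain rfl : r = t := hr
      refine (h₂ z r).trans ?_
      rw [Real.norm_eq_abs]
      gcongr
      exact one_add_norm_rpow_neg_le (by positivity) (by rwa [← dist_eq_norm, dist_comm])
    have hsd := norm_second_difference_le φ.differentiable
      (SchwartzMap.fderivCLM ℝ _ _ φ).differentiable
      ((convex_closedBall x ((1 + ‖x‖) / 2)).prod (convex_singleton t)) hbound
      (a := (x, t)) (b := (y, 0)) ⟨by simpa using hy, by simp⟩ ⟨by simpa using hy, by simp⟩
    have hnorm : ‖((y, 0) : EuclideanSpace ℝ (Fin n) × ℝ)‖ = ‖y‖ := by simp [Prod.norm_def]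
    rw [hnorm] at hsd
    simp only [Prod.mk_add_mk, Prod.mk_sub_mk, add_zero, sub_zero] at hsd
    refine hsd.trans ?_
    have : 0 ≤ 2 * C₀ * T * (1 + ‖x‖) ^ (-M) * ‖y‖ ^ 2 := by positivity
    linarith
  · intro y
    have hA : 2 * C₀ * T ≤ (2 * C₀ + 2 * C₂ * 2 ^ M) * T := by
      gcongr
      exact le_add_of_nonneg_right (by positivity)
    have e1 := h₀ x t
    have e2 := h₀ (x + y) t
    have e3 := h₀ (x - y) t
    rw [Real.norm_eq_abs t, ← hT] at e1 e2 e3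
    rw [← Real.norm_eq_abs]
    calc ‖2 * φ (x, t) - φ (x + y, t) - φ (x - y, t)‖
        ≤ 2 * ‖φ (x, t)‖ + ‖φ (x + y, t)‖ + ‖φ (x - y, t)‖ := by
          refine (norm_sub_le _ _).trans (add_le_add_left ((norm_sub_le _ _).trans ?_) _)
          rw [norm_mul, Real.norm_two]
      _ ≤ 2 * C₀ * T *
          ((1 + ‖x‖) ^ (-M) + (1 + ‖x + y‖) ^ (-M) + (1 + ‖x - y‖) ^ (-M)) := by
          linarith [norm_nonneg (φ (x + y, t)), norm_nonneg (φ (x - y, t))]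
      _ ≤ _ := by gcongr

/-- sharp decay estimate for `[D_right^α + (-Δ)^s]φ` when `φ` is Schwartz:
`|D_right^α φ(x,t) + (-Δ)^s φ(x,t)| ≤ C / ((1+|x|^{n+2s})(1+|t|^{1+α}))`. -/
theorem decay_estimate_dual_fractional_operator
    (n : ℕ) (hn : 1 ≤ n) (α s : ℝ) (hα0 : 0 < α) (hα1 : α < 1)
    (hs0 : 0 < s) (hs1 : s < 1)
    (φ : SchwartzMap (EuclideanSpace ℝ (Fin n) × ℝ) ℝ) :
    ∃ C > (0 : ℝ), ∀ (x : EuclideanSpace ℝ (Fin n)) (t : ℝ),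
      |marchaudRight α (⇑φ) x t + fracLap s (⇑φ) x t| ≤
        C / ((1 + ‖x‖ ^ ((n : ℝ) + 2 * s)) * (1 + |t| ^ (1 + α))) := by
  obtain ⟨C₁, hC₁, h₁⟩ := exists_abs_marchaudRight_le hα0 hα1 φ (n + 2)
  obtain ⟨C₂, hC₂, h₂⟩ := exists_abs_fracLap_le hn hs0 hs1 φ 2
  refine ⟨4 * (C₁ + C₂) + 1, by positivity, fun x t => ?_⟩
  have hx : (1 + ‖x‖) ^ (-((n + 2 : ℕ) : ℝ)) ≤ (1 + ‖x‖) ^ (-((n : ℝ) + 2 * s)) :=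
    Real.rpow_le_rpow_of_exponent_le (by linarith [norm_nonneg x]) (by push_cast; linarith)
  have ht : (1 + |t|) ^ (-((2 : ℕ) : ℝ)) ≤ (1 + |t|) ^ (-(1 + α)) :=
    Real.rpow_le_rpow_of_exponent_le (by linarith [abs_nonneg t]) (by push_cast; linarith)
  calc |marchaudRight α φ x t + fracLap s φ x t|
      ≤ |marchaudRight α φ x t| + |fracLap s φ x t| := abs_add_le _ _
    _ ≤ C₁ * (1 + ‖x‖) ^ (-((n : ℝ) + 2 * s)) * (1 + |t|) ^ (-(1 + α)) +
        C₂ * (1 + ‖x‖) ^ (-((n : ℝ) + 2 * s)) * (1 + |t|) ^ (-(1 + α)) := by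
      refine add_le_add ((h₁ x t).trans ?_) ((h₂ x t).trans ?_) <;> gcongr
    _ = (C₁ + C₂) * ((1 + ‖x‖) ^ (-((n : ℝ) + 2 * s)) * (1 + |t|) ^ (-(1 + α))) := by ring
    _ ≤ (C₁ + C₂) * (2 / (1 + ‖x‖ ^ ((n : ℝ) + 2 * s)) * (2 / (1 + |t| ^ (1 + α)))) := by
      gcongr
      · exact one_add_rpow_neg_le (norm_nonneg x) (by positivity)
      · exact one_add_rpow_neg_le (abs_nonneg t) (by positivity)
    _ = 4 * (C₁ + C₂) / ((1 + ‖x‖ ^ ((n : ℝ) + 2 * s)) * (1 + |t| ^ (1 + α))) := by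
      rw [div_mul_div_comm, ← mul_div_assoc]
      ring
    _ ≤ _ := by
      gcongr
      linarith
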